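/- Let p be a prime and let R be a commutative local F_p-algebra that is finite-dimensional as an F_p-vector space, with maximal ideal m and residue field F = R/m. Let G be a group and let M, N, Q be modules over the group algebra R[G] that are free of rank 2 as R-modules. Suppose there is a short exact sequence 0 → N → M ⊕ M → Q → 0 of R[G]-modules, and suppose that the F[G]-module N̄ = (R/m) ⊗_R N is indecomposable, i.e. N̄ is nonzero and is not the internal direct sum of two nonzero F[G]-submodules. Then N ≅ M and M ≅ Q as R[G]-modules. -/

import Mathlib

open TensorProduct

/-- Let `R` be local and let `f₁, f₂ : N → M` be equivariant maps from a rank two representation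
with indecomposable reduction, such that the reductions of `f₁` and `f₂` have trivial common kernel.
Then the reduction of `f₁` or that of `f₂` is injective. -/
theorem injective_lTensor_residueField_or {R G M N : Type*} [CommRing R] [IsLocalRing R] [Group G]
    [AddCommGroup M] [Module R M] [AddCommGroup N] [Module R N] (bN : Module.Basis (Fin 2) R N)
    (ρM : Representation R G M) (ρN : Representation R G N) (f₁ f₂ : N →ₗ[R] M)
    (h₁ : ∀ g, f₁ ∘ₗ ρN g = ρM g ∘ₗ f₁) (h₂ : ∀ g, f₂ ∘ₗ ρN g = ρM g ∘ₗ f₂)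
    (hker : ∀ x, f₁.baseChange (IsLocalRing.ResidueField R) x = 0 →
      f₂.baseChange (IsLocalRing.ResidueField R) x = 0 → x = 0)
    (hindec : ¬ ∃ W₁ W₂ :
        Submodule (IsLocalRing.ResidueField R) (IsLocalRing.ResidueField R ⊗[R] N),
        (∀ g : G, W₁.map (LinearMap.baseChange (IsLocalRing.ResidueField R) (ρN g)) ≤ W₁) ∧
        (∀ g : G, W₂.map (LinearMap.baseChange (IsLocalRing.ResidueField R) (ρN g)) ≤ W₂) ∧
        W₁ ≠ ⊥ ∧ W₂ ≠ ⊥ ∧ W₁ ⊓ W₂ = ⊥ ∧ W₁ ⊔ W₂ = ⊤) :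
    Function.Injective (f₁.lTensor (IsLocalRing.ResidueField R)) ∨
      Function.Injective (f₂.lTensor (IsLocalRing.ResidueField R)) := by
  have ker_invariant (f : N →ₗ[R] M) (hf : ∀ g, f ∘ₗ ρN g = ρM g ∘ₗ f) (g : G) :
      (LinearMap.ker (f.baseChange (IsLocalRing.ResidueField R))).map
        ((ρN g).baseChange (IsLocalRing.ResidueField R)) ≤
      LinearMap.ker (f.baseChange (IsLocalRing.ResidueField R)) := by
    rintro _ ⟨x, hx, rfl⟩
    rw [SetLike.mem_coe, LinearMap.mem_ker] at hx
    rw [LinearMap.mem_ker, ← LinearMap.comp_apply, ← LinearMap.baseChange_comp, hf,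
      LinearMap.baseChange_comp, LinearMap.comp_apply, hx, map_zero]
  have disjoint : LinearMap.ker (f₁.baseChange (IsLocalRing.ResidueField R)) ⊓
      LinearMap.ker (f₂.baseChange (IsLocalRing.ResidueField R)) = ⊥ :=
    (Submodule.eq_bot_iff _).2 fun x hx => hker x hx.1 hx.2
  have : Module.Finite R N := .of_basis bN
  have : Module.Free R N := .of_basis bN
  have finrank_eq :
      Module.finrank (IsLocalRing.ResidueField R) (IsLocalRing.ResidueField R ⊗[R] N) = 2 := by
    rw [Module.finrank_baseChange, Module.finrank_eq_card_basis bN, Fintype.card_fin]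
  by_contra! h
  have ker_ne_bot (f : N →ₗ[R] M)
      (hf : ¬ Function.Injective (f.lTensor (IsLocalRing.ResidueField R))) :
      LinearMap.ker (f.baseChange (IsLocalRing.ResidueField R)) ≠ ⊥ := by
    rwa [Ne, LinearMap.ker_eq_bot, LinearMap.baseChange_eq_ltensor]
  refine hindec ⟨_, _, ker_invariant f₁ h₁, ker_invariant f₂ h₂, ker_ne_bot f₁ h.1,
    ker_ne_bot f₂ h.2, disjoint, Submodule.eq_top_of_finrank_eq (le_antisymm
      (Submodule.finrank_le _) ?_)⟩
  have hsum := Submodule.finrank_sup_add_finrank_inf_eq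
    (LinearMap.ker (f₁.baseChange (IsLocalRing.ResidueField R)))
    (LinearMap.ker (f₂.baseChange (IsLocalRing.ResidueField R)))
  rw [disjoint, finrank_bot] at hsum
  have := Submodule.one_le_finrank_iff.2 (ker_ne_bot f₁ h.1)
  have := Submodule.one_le_finrank_iff.2 (ker_ne_bot f₂ h.2)
  omega

/-- Over a local ring, a map between free modules of the same finite rank which is injective modulo
the maximal ideal is bijective. -/
theorem bijective_of_injective_lTensor_residueField {R M N ι : Type*} [CommRing R] [IsLocalRing R]
    [Finite ι] [AddCommGroup M] [Module R M] [AddCommGroup N] [Module R N]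
    (bM : Module.Basis ι R M) (bN : Module.Basis ι R N) (f : N →ₗ[R] M)
    (hf : Function.Injective (f.lTensor (IsLocalRing.ResidueField R))) :
    Function.Bijective f := by
  have : Module.Finite R N := .of_basis bN
  have : Module.Finite R M := .of_basis bM
  have : Module.Free R M := .of_basis bM
  obtain ⟨l, hl⟩ := (IsLocalRing.split_injective_iff_lTensor_residueField_injective f).2 hf
  have hlf : Function.LeftInverse l f := LinearMap.congr_fun hl
  let e : N ≃ₗ[R] M := bN.equiv bM (Equiv.refl ι)
  have hl_inj : Function.Injective l := by
    have h := OrzechProperty.injective_of_surjective_endomorphism (e.toLinearMap ∘ₗ l)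
      (e.surjective.comp hlf.surjective)
    exact Function.Injective.of_comp (f := e) h
  exact ⟨hlf.injective, (hlf.rightInverse_of_injective hl_inj).surjective⟩

/-- In a short exact sequence `0 → N → M₁ × M₂ → Q → 0` where `N → M₁` is bijective, the map
`M₂ → Q` is bijective. -/
theorem bijective_comp_inr_of_bijective_fst_comp {R M₁ M₂ N Q : Type*} [Ring R]
    [AddCommGroup M₁] [Module R M₁] [AddCommGroup M₂] [Module R M₂] [AddCommGroup N] [Module R N]
    [AddCommGroup Q] [Module R Q] (α : N →ₗ[R] M₁ × M₂) (β : M₁ × M₂ →ₗ[R] Q)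
    (hsurj : Function.Surjective β) (hexact : Function.Exact α β)
    (h : Function.Bijective (LinearMap.fst R M₁ M₂ ∘ₗ α)) :
    Function.Bijective (β ∘ₗ LinearMap.inr R M₁ M₂) := by
  constructor
  · rw [injective_iff_map_eq_zero]
    intro y hy
    obtain ⟨n, hn⟩ := (hexact _).1 hy
    have hn0 : n = 0 := h.1 (by simp [hn])
    simpa [hn0] using (congrArg Prod.snd hn).symm
  · intro q
    obtain ⟨⟨x, y⟩, rfl⟩ := hsurj q
    obtain ⟨n, hn⟩ := h.2 x
    refine ⟨y - (α n).2, ?_⟩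
    have hxy : ((0, y - (α n).2) : M₁ × M₂) = (x, y) - α n := by
      ext <;> simp [← hn]
    simp [hxy, hexact.apply_apply_eq_zero]

/-- The symmetric version of `bijective_comp_inr_of_bijective_fst_comp`. -/
theorem bijective_comp_inl_of_bijective_snd_comp {R M₁ M₂ N Q : Type*} [Ring R]
    [AddCommGroup M₁] [Module R M₁] [AddCommGroup M₂] [Module R M₂] [AddCommGroup N] [Module R N]
    [AddCommGroup Q] [Module R Q] (α : N →ₗ[R] M₁ × M₂) (β : M₁ × M₂ →ₗ[R] Q)
    (hsurj : Function.Surjective β) (hexact : Function.Exact α β)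
    (h : Function.Bijective (LinearMap.snd R M₁ M₂ ∘ₗ α)) :
    Function.Bijective (β ∘ₗ LinearMap.inl R M₁ M₂) := by
  let e := LinearEquiv.prodComm R M₂ M₁
  refine bijective_comp_inr_of_bijective_fst_comp (e.symm.toLinearMap ∘ₗ α) (β ∘ₗ e.toLinearMap)
    (hsurj.comp e.surjective) (fun x => ?_) h
  refine (hexact (e x)).trans (exists_congr fun n => ?_)
  exact e.symm_apply_eq.symm

/-- **Proposition 4.4.** Let `p` be a prime and `R` a commutative local `𝔽_p`-algebra which is
finite-dimensional as an `𝔽_p`-vector space, with maximal ideal `m` and residue field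
`F = R/m`. Let `G` be a group and `M`, `N`, `Q` be `R[G]`-modules that are free of rank `2`
as `R`-modules (here given as `R`-modules with representations of `G`). Suppose there is a
short exact sequence `0 → N → M ⊕ M → Q → 0` of `R[G]`-modules and that the `F[G]`-module
`N̄ = (R/m) ⊗_R N` is indecomposable (nonzero and not an internal direct sum of two nonzero
`F[G]`-submodules). Then `N ≅ M` and `M ≅ Q` as `R[G]`-modules. -/
theorem weight_one_stmt4
    (p : ℕ) [Fact p.Prime] (R : Type*) [CommRing R] [IsLocalRing R]
    [Algebra (ZMod p) R] [FiniteDimensional (ZMod p) R]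
    (G : Type*) [Group G]
    (M N Q : Type*) [AddCommGroup M] [Module R M] [AddCommGroup N] [Module R N]
    [AddCommGroup Q] [Module R Q]
    (bM : Module.Basis (Fin 2) R M) (bN : Module.Basis (Fin 2) R N) (bQ : Module.Basis (Fin 2) R Q)
    (ρM : Representation R G M) (ρN : Representation R G N) (ρQ : Representation R G Q)
    (α : N →ₗ[R] M × M) (β : M × M →ₗ[R] Q)
    (hα : ∀ g : G, α ∘ₗ ρN g = (LinearMap.prodMap (ρM g) (ρM g)) ∘ₗ α)
    (hβ : ∀ g : G, β ∘ₗ (LinearMap.prodMap (ρM g) (ρM g)) = ρQ g ∘ₗ β)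
    (hinj : Function.Injective α) (hsurj : Function.Surjective β)
    (hexact : LinearMap.range α = LinearMap.ker β)
    (hnontriv : Nontrivial (IsLocalRing.ResidueField R ⊗[R] N))
    (hindec : ¬ ∃ W₁ W₂ :
        Submodule (IsLocalRing.ResidueField R) (IsLocalRing.ResidueField R ⊗[R] N),
        (∀ g : G, W₁.map (LinearMap.baseChange (IsLocalRing.ResidueField R) (ρN g)) ≤ W₁) ∧
        (∀ g : G, W₂.map (LinearMap.baseChange (IsLocalRing.ResidueField R) (ρN g)) ≤ W₂) ∧
        W₁ ≠ ⊥ ∧ W₂ ≠ ⊥ ∧ W₁ ⊓ W₂ = ⊥ ∧ W₁ ⊔ W₂ = ⊤) :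
    (∃ e : N ≃ₗ[R] M, ∀ (g : G) (x : N), e (ρN g x) = ρM g (e x)) ∧
    (∃ e : M ≃ₗ[R] Q, ∀ (g : G) (x : M), e (ρM g x) = ρQ g (e x)) := by
  have hex : Function.Exact α β := LinearMap.exact_iff.2 hexact.symm
  have : Module.Free R Q := .of_basis bQ
  obtain ⟨s, hs⟩ := Module.projective_lifting_property β LinearMap.id hsurj
  have split : (Function.Injective α ∧ ∃ s, β ∘ₗ s = LinearMap.id) ↔
      (Function.Surjective β ∧ ∃ l, l ∘ₗ α = LinearMap.id) := hex.split_tfae'.out 0 1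
  obtain ⟨-, l, hl⟩ := split.1 ⟨hinj, s, hs⟩
  have hfst (g : G) : (LinearMap.fst R M M ∘ₗ α) ∘ₗ ρN g = ρM g ∘ₗ LinearMap.fst R M M ∘ₗ α := by
    rw [LinearMap.comp_assoc, hα]; rfl
  have hsnd (g : G) : (LinearMap.snd R M M ∘ₗ α) ∘ₗ ρN g = ρM g ∘ₗ LinearMap.snd R M M ∘ₗ α := by
    rw [LinearMap.comp_assoc, hα]; rfl
  have hinl (g : G) (x : M) :
      (β ∘ₗ LinearMap.inl R M M) (ρM g x) = ρQ g ((β ∘ₗ LinearMap.inl R M M) x) := by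
    simpa using LinearMap.congr_fun (hβ g) (x, 0)
  have hinr (g : G) (x : M) :
      (β ∘ₗ LinearMap.inr R M M) (ρM g x) = ρQ g ((β ∘ₗ LinearMap.inr R M M) x) := by
    simpa using LinearMap.congr_fun (hβ g) (0, x)
  have hker (x : IsLocalRing.ResidueField R ⊗[R] N)
      (h₁ : (LinearMap.fst R M M ∘ₗ α).baseChange (IsLocalRing.ResidueField R) x = 0)
      (h₂ : (LinearMap.snd R M M ∘ₗ α).baseChange (IsLocalRing.ResidueField R) x = 0) : x = 0 := by
    have hid : (l ∘ₗ LinearMap.inl R M M) ∘ₗ (LinearMap.fst R M M ∘ₗ α) +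
        (l ∘ₗ LinearMap.inr R M M) ∘ₗ (LinearMap.snd R M M ∘ₗ α) = LinearMap.id := by
      ext n
      simpa [← map_add] using LinearMap.congr_fun hl n
    have hx := congrArg (fun f => f.baseChange (IsLocalRing.ResidueField R) x) hid
    simp only [LinearMap.baseChange_add, LinearMap.baseChange_comp _ (l ∘ₗ _), LinearMap.add_apply,
      LinearMap.comp_apply (LinearMap.baseChange _ (l ∘ₗ _)), h₁, h₂, map_zero, add_zero,
      LinearMap.baseChange_id, LinearMap.id_apply] at hx
    exact hx.symm
  rcases injective_lTensor_residueField_or bN ρM ρN _ _ hfst hsnd hker hindec with h | h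
  · have hb := bijective_of_injective_lTensor_residueField bM bN _ h
    exact ⟨⟨.ofBijective _ hb, fun g => LinearMap.congr_fun (hfst g)⟩,
      .ofBijective _ (bijective_comp_inr_of_bijective_fst_comp α β hsurj hex hb), hinr⟩
  · have hb := bijective_of_injective_lTensor_residueField bM bN _ h
    exact ⟨⟨.ofBijective _ hb, fun g => LinearMap.congr_fun (hsnd g)⟩,
      .ofBijective _ (bijective_comp_inl_of_bijective_snd_comp α β hsurj hex hb), hinl⟩
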